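/- arXiv:2206.00163 — 2 statements merged into one kernel-verified Lean document; each statement's English description precedes it below -/
import Mathlib

section
/- ∑_{n∈ℤ} ν⁶ⁿ qⁿ² = φ₂²φ₃/(φ₁φ₆), where ν = e^{πi/3} is a primitive sixth root of unity and φ_k = ∏_{n≥1}(1−q^{kn}). -/
/-- The infinite product `φ_k = (q^k;q^k)_∞ = ∏_{n≥1}(1 − q^(kn))`. -/
noncomputable def phiP (q : ℂ) (k : ℕ) : ℂ := ∏' n : ℕ, (1 - q ^ (k * (n + 1)))

/-!
With `ν + ν⁻¹ = 1` one has `(1 + νx)(1 + ν⁻¹x)(1 - x) = 1 - x³`. By the Jacobi triple product the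
theta series is `(q²; q²)_∞ ∏ (1 + ν q^(2j+1)) (1 + ν⁻¹ q^(2j+1))`, so multiplying it by
`(q; q²)_∞ = φ₁ / φ₂` gives `φ₂ (q³; q⁶)_∞ = φ₂ φ₃ / φ₆`. The triple product is the limit of its
finite form, a shifted `q`-binomial theorem whose Gaussian binomial coefficients tend to
`1 / (q²; q²)_∞`.
-/

open Filter Topology Finset

/-- The finite `q`-Pochhammer symbol `(a; q)_n`. -/
def qPochhammer {R : Type*} [CommRing R] (a q : R) (n : ℕ) : R :=
  ∏ j ∈ range n, (1 - a * q ^ j)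

/-- The infinite `q`-Pochhammer symbol `(a; q)_∞`, meaningful for `‖q‖ < 1`. -/
noncomputable def qPochhammerInf {R : Type*} [CommRing R] [TopologicalSpace R] (a q : R) : R :=
  ∏' j : ℕ, (1 - a * q ^ j)

/-- The Gaussian binomial coefficient, the polynomial in `q` deforming `n.choose k`. The
`q`-Pascal rule is taken as the definition so that no division is needed. -/
def gaussBinom {R : Type*} [Semiring R] (q : R) : ℕ → ℕ → R
  | _, 0 => 1
  | 0, _ + 1 => 0
  | n + 1, k + 1 => gaussBinom q n k + q ^ (k + 1) * gaussBinom q n (k + 1)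

lemma sq_pow_choose_two_mul_pow {M : Type*} [Monoid M] (q : M) (n : ℕ) :
    (q ^ 2) ^ n.choose 2 * q ^ n = q ^ n ^ 2 := by
  have exponent : 2 * n.choose 2 + n = n ^ 2 := by
    induction n with
    | zero => rfl
    | succ n ih =>
      rw [Nat.choose_succ_succ' n 1, Nat.choose_one_right]
      linear_combination ih
  rw [← pow_mul, ← pow_add, exponent]

section Semiring

variable {R : Type*} [Semiring R]

@[simp]
lemma gaussBinom_zero_right (q : R) (n : ℕ) : gaussBinom q n 0 = 1 := by
  cases n <;> rfl

lemma gaussBinom_succ_succ (q : R) (n k : ℕ) :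
    gaussBinom q (n + 1) (k + 1) = gaussBinom q n k + q ^ (k + 1) * gaussBinom q n (k + 1) :=
  rfl

lemma gaussBinom_eq_zero_of_lt (q : R) {n k : ℕ} (h : n < k) : gaussBinom q n k = 0 := by
  induction n generalizing k with
  | zero => obtain ⟨k, rfl⟩ := Nat.exists_eq_succ_of_ne_zero h.ne'; rfl
  | succ n ih =>
    obtain ⟨k, rfl⟩ := Nat.exists_eq_succ_of_ne_zero (Nat.ne_zero_of_lt h)
    rw [gaussBinom_succ_succ, ih (by omega), ih (by omega), mul_zero, add_zero]

lemma gaussBinom_self (q : R) (n : ℕ) : gaussBinom q n n = 1 := by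
  induction n with
  | zero => rfl
  | succ n ih =>
    rw [gaussBinom_succ_succ, ih, gaussBinom_eq_zero_of_lt q n.lt_succ_self, mul_zero, add_zero]

end Semiring

section CommRing

variable {R : Type*} [CommRing R]

@[simp]
lemma qPochhammer_zero (a q : R) : qPochhammer a q 0 = 1 :=
  prod_range_zero _

lemma qPochhammer_succ (a q : R) (n : ℕ) :
    qPochhammer a q (n + 1) = qPochhammer a q n * (1 - a * q ^ n) :=
  prod_range_succ _ n

lemma qPochhammer_add (a q : R) (m n : ℕ) :
    qPochhammer a q (m + n) = qPochhammer a q m * qPochhammer (a * q ^ m) q n := by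
  simp only [qPochhammer, prod_range_add, pow_add, mul_assoc]

lemma qPochhammer_succ' (a q : R) (n : ℕ) :
    qPochhammer a q (n + 1) = (1 - a) * qPochhammer (a * q) q n := by
  simpa [qPochhammer_succ, add_comm] using qPochhammer_add a q 1 n

lemma qPochhammer_self_succ (q : R) (n : ℕ) :
    qPochhammer q q (n + 1) = qPochhammer q q n * (1 - q ^ (n + 1)) := by
  rw [qPochhammer_succ, pow_succ']

lemma gaussBinom_mul_qPochhammer_mul_qPochhammer (q : R) (k l : ℕ) :
    gaussBinom q (k + l) k * (qPochhammer q q k * qPochhammer q q l) =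
      qPochhammer q q (k + l) := by
  induction h : k + l generalizing k l with
  | zero => obtain ⟨rfl, rfl⟩ := Nat.add_eq_zero_iff.mp h; simp
  | succ n ih =>
    rcases k with _ | k
    · obtain rfl : l = n + 1 := by omega
      simp
    rcases l with _ | l
    · obtain rfl : k = n := by omega
      simp [gaussBinom_self]
    have drop_left := ih k (l + 1) (by omega)
    have drop_right := ih (k + 1) l (by omega)
    obtain rfl : n = k + l + 1 := by omega
    rw [qPochhammer_self_succ q l] at drop_left
    rw [qPochhammer_self_succ q k] at drop_right
    rw [gaussBinom_succ_succ, qPochhammer_self_succ q k, qPochhammer_self_succ q l,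
      qPochhammer_self_succ q (k + l + 1)]
    linear_combination (1 - q ^ (k + 1)) * drop_left +
      q ^ (k + 1) * (1 - q ^ (l + 1)) * drop_right

/-- The `q`-binomial theorem (Rothe's identity). -/
theorem qPochhammer_neg_eq_sum_gaussBinom (x q : R) (n : ℕ) :
    qPochhammer (-x) q n =
      ∑ k ∈ range (n + 1), gaussBinom q n k * q ^ k.choose 2 * x ^ k := by
  induction n generalizing x with
  | zero => simp
  | succ n ih =>
    have last_eq_zero : gaussBinom q n (n + 1) = 0 := gaussBinom_eq_zero_of_lt q n.lt_succ_self
    have extend : ∑ k ∈ range (n + 1), gaussBinom q n k * q ^ k.choose 2 * (x * q) ^ k =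
        ∑ k ∈ range (n + 2), gaussBinom q n k * q ^ k.choose 2 * (x * q) ^ k := by
      rw [sum_range_succ _ (n + 1), last_eq_zero, zero_mul, zero_mul, add_zero]
    rw [qPochhammer_succ', sub_neg_eq_add, neg_mul, ih, add_comm 1 x, add_mul, one_mul]
    nth_rw 2 [extend]
    rw [sum_range_succ' _ (n + 1), sum_range_succ' _ (n + 1), mul_sum, ← add_assoc,
      ← sum_add_distrib]
    congr 1
    · refine sum_congr rfl fun k _ ↦ ?_
      rw [gaussBinom_succ_succ, Nat.choose_succ_succ' k 1, Nat.choose_one_right]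
      ring
    · simp

end CommRing

section Field

variable {K : Type*} [Field K]

lemma qPochhammer_reflect {a q : K} (ha : a ≠ 0) (hq : q ≠ 0) (n : ℕ) :
    qPochhammer (q / (a * q ^ n)) q n * ((-a) ^ n * q ^ n.choose 2) = qPochhammer a q n := by
  induction n with
  | zero => simp
  | succ n ih =>
    have shift : q / (a * q ^ (n + 1)) * q = q / (a * q ^ n) := by
      field_simp
      ring
    have first_factor : (1 - q / (a * q ^ (n + 1))) * (-a * q ^ n) = 1 - a * q ^ n := by
      field_simp
      ring
    rw [qPochhammer_succ', shift, qPochhammer_succ, ← ih, ← first_factor,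
      Nat.choose_succ_succ' n 1, Nat.choose_one_right]
    ring

lemma qPochhammer_sq_mul_qPochhammer_sq_eq_sum_range {z q : K} (hz : z ≠ 0) (hq : q ≠ 0)
    (N : ℕ) :
    qPochhammer (-(z * q)) (q ^ 2) N * qPochhammer (-(z⁻¹ * q)) (q ^ 2) N =
      ∑ m ∈ range (N + N + 1), gaussBinom (q ^ 2) (N + N) m *
        (z ^ (m - N : ℤ) * q ^ (m - N : ℤ) ^ 2) := by
  have hq2 : q ^ 2 ≠ 0 := pow_ne_zero 2 hq
  have ha : -(z⁻¹ * q) ≠ 0 := neg_ne_zero.mpr (mul_ne_zero (inv_ne_zero hz) hq)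
  -- Shifting `z` by `q ^ (-2 * N)` turns the two products into a single one of length `2 * N`.
  set x := z * q / (q ^ 2) ^ N with hx
  have reflect := qPochhammer_reflect ha hq2 N
  rw [show q ^ 2 / (-(z⁻¹ * q) * (q ^ 2) ^ N) = -x by rw [hx]; field_simp, neg_neg] at reflect
  have split := qPochhammer_add (-x) (q ^ 2) N N
  rw [show -x * (q ^ 2) ^ N = -(z * q) by rw [hx]; field_simp] at split
  have assemble : qPochhammer (-(z * q)) (q ^ 2) N * qPochhammer (-(z⁻¹ * q)) (q ^ 2) N =
      qPochhammer (-x) (q ^ 2) (N + N) * ((z⁻¹ * q) ^ N * (q ^ 2) ^ N.choose 2) := by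
    rw [split, ← reflect]
    ring
  rw [assemble, qPochhammer_neg_eq_sum_gaussBinom, sum_mul]
  refine sum_congr rfl fun m _ ↦ ?_
  have theta_term : q ^ (m - N : ℤ) ^ 2 = q ^ m ^ 2 * q ^ N ^ 2 / ((q ^ 2) ^ N) ^ m := by
    rw [eq_div_iff (by positivity)]
    simp only [← zpow_natCast, ← zpow_mul, ← zpow_add₀ hq]
    congr 1
    push_cast
    ring
  rw [theta_term, ← sq_pow_choose_two_mul_pow q m, ← sq_pow_choose_two_mul_pow q N, hx,
    zpow_sub₀ hz, zpow_natCast, zpow_natCast]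
  simp only [mul_pow, div_pow, inv_pow]
  field_simp

theorem qPochhammer_sq_mul_qPochhammer_sq_eq_sum_Icc {z q : K} (hz : z ≠ 0) (hq : q ≠ 0)
    (N : ℕ) :
    qPochhammer (-(z * q)) (q ^ 2) N * qPochhammer (-(z⁻¹ * q)) (q ^ 2) N =
      ∑ n ∈ Icc (-N : ℤ) N, gaussBinom (q ^ 2) (N + N) (N + n).toNat * (z ^ n * q ^ n ^ 2) := by
  rw [qPochhammer_sq_mul_qPochhammer_sq_eq_sum_range hz hq]
  refine sum_nbij' (fun m ↦ (m - N : ℤ)) (fun n ↦ (N + n).toNat) ?_ ?_ ?_ ?_ ?_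
  · intro m hm
    simp only [mem_range, mem_Icc] at hm ⊢
    omega
  · intro n hn
    simp only [mem_range, mem_Icc] at hn ⊢
    omega
  · intro m _
    simp
  · intro n hn
    simp only [mem_Icc] at hn
    omega
  · intro m _
    simp

end Field

section NormedField

variable {𝕜 : Type*} [NormedField 𝕜]

lemma norm_pow_lt_one {q : 𝕜} (hq : ‖q‖ < 1) {n : ℕ} (hn : n ≠ 0) : ‖q ^ n‖ < 1 := by
  rw [norm_pow]
  exact pow_lt_one₀ (norm_nonneg q) hq hn

lemma one_sub_pow_ne_zero {q : 𝕜} (hq : ‖q‖ < 1) {n : ℕ} (hn : n ≠ 0) : 1 - q ^ n ≠ 0 := by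
  refine sub_ne_zero.mpr fun h ↦ (norm_pow_lt_one hq hn).ne ?_
  rw [← h, norm_one]

lemma qPochhammer_self_ne_zero {q : 𝕜} (hq : ‖q‖ < 1) (n : ℕ) : qPochhammer q q n ≠ 0 :=
  prod_ne_zero_iff.mpr fun j _ ↦ by
    simpa only [pow_succ'] using one_sub_pow_ne_zero hq j.succ_ne_zero

lemma gaussBinom_add_eq_div {q : 𝕜} (hq : ‖q‖ < 1) (k l : ℕ) :
    gaussBinom q (k + l) k =
      qPochhammer q q (k + l) / (qPochhammer q q k * qPochhammer q q l) :=
  eq_div_of_mul_eq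
    (mul_ne_zero (qPochhammer_self_ne_zero hq k) (qPochhammer_self_ne_zero hq l))
    (gaussBinom_mul_qPochhammer_mul_qPochhammer q k l)

lemma summable_norm_neg_mul_pow (a : 𝕜) {q : 𝕜} (hq : ‖q‖ < 1) :
    Summable fun j : ℕ ↦ ‖-(a * q ^ j)‖ := by
  simpa only [norm_neg, norm_mul, norm_pow] using
    (summable_geometric_of_lt_one (norm_nonneg q) hq).mul_left ‖a‖

lemma summable_norm_zpow_mul_zpow_sq {z q : 𝕜} (hz : z ≠ 0) (hq : q ≠ 0) (hq1 : ‖q‖ < 1) :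
    Summable fun n : ℤ ↦ ‖z ^ n * q ^ n ^ 2‖ := by
  set τ : ℂ := ↑(-Real.log ‖q‖ / Real.pi) * Complex.I with hτ
  set w : ℂ := ↑(-Real.log ‖z‖ / (2 * Real.pi)) * Complex.I with hw
  have im_pos : 0 < τ.im := by
    rw [hτ, Complex.im_ofReal_mul, Complex.I_im, mul_one]
    exact div_pos (neg_pos.mpr (Real.log_neg (norm_pos_iff.mpr hq) hq1)) Real.pi_pos
  refine ((summable_jacobiTheta₂_term_iff w τ).mpr im_pos).norm.congr fun n ↦ ?_
  have zpow_eq_exp {x : 𝕜} (hx : x ≠ 0) (m : ℤ) : ‖x ^ m‖ = Real.exp (Real.log ‖x‖ * m) := by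
    rw [norm_zpow, ← Real.rpow_intCast, Real.rpow_def_of_pos (norm_pos_iff.mpr hx)]
  rw [norm_jacobiTheta₂_term, hτ, hw, Complex.im_ofReal_mul, Complex.im_ofReal_mul, Complex.I_im,
    norm_mul, zpow_eq_exp hz, zpow_eq_exp hq, ← Real.exp_add]
  congr 1
  push_cast
  field_simp
  ring

variable [CompleteSpace 𝕜]

lemma multipliable_one_sub_mul_pow (a : 𝕜) {q : 𝕜} (hq : ‖q‖ < 1) :
    Multipliable fun j : ℕ ↦ 1 - a * q ^ j := by
  simpa only [sub_eq_add_neg] using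
    multipliable_one_add_of_summable (summable_norm_neg_mul_pow a hq)

lemma tendsto_qPochhammer (a : 𝕜) {q : 𝕜} (hq : ‖q‖ < 1) :
    Tendsto (qPochhammer a q) atTop (𝓝 (qPochhammerInf a q)) :=
  (multipliable_one_sub_mul_pow a hq).tendsto_prod_tprod_nat

lemma qPochhammerInf_self_ne_zero {q : 𝕜} (hq : ‖q‖ < 1) : qPochhammerInf q q ≠ 0 := by
  have factor_ne_zero (j : ℕ) : 1 + -(q * q ^ j) ≠ 0 := by
    simpa only [pow_succ', sub_eq_add_neg] using one_sub_pow_ne_zero hq j.succ_ne_zero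
  simpa only [qPochhammerInf, sub_eq_add_neg] using
    tprod_one_add_ne_zero_of_summable factor_ne_zero (summable_norm_neg_mul_pow q hq)

lemma qPochhammerInf_eq_mul_sq (a : 𝕜) {q : 𝕜} (hq : ‖q‖ < 1) :
    qPochhammerInf a q = qPochhammerInf a (q ^ 2) * qPochhammerInf (a * q) (q ^ 2) := by
  have hq2 := norm_pow_lt_one hq two_ne_zero
  have even_factor (j : ℕ) : 1 - a * (q ^ 2) ^ j = 1 - a * q ^ (2 * j) := by rw [pow_mul]
  have odd_factor (j : ℕ) : 1 - a * q * (q ^ 2) ^ j = 1 - a * q ^ (2 * j + 1) := by ring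
  have even := multipliable_one_sub_mul_pow a hq2
  have odd := multipliable_one_sub_mul_pow (a * q) hq2
  simp only [even_factor] at even
  simp only [odd_factor] at odd
  simp only [qPochhammerInf, even_factor, odd_factor]
  exact (tprod_even_mul_odd (f := fun j ↦ 1 - a * q ^ j) even odd).symm

lemma qPochhammerInf_mul_mul_eq_cube {ν : 𝕜} (hν : ν ^ 2 - ν + 1 = 0) (a : 𝕜) {q : 𝕜}
    (hq : ‖q‖ < 1) :
    qPochhammerInf (-(ν * a)) q * qPochhammerInf (-(ν⁻¹ * a)) q * qPochhammerInf a q =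
      qPochhammerInf (a ^ 3) (q ^ 3) := by
  have hν0 : ν ≠ 0 := by rintro rfl; simp at hν
  have factor (j : ℕ) : (1 - -(ν * a) * q ^ j) * (1 - -(ν⁻¹ * a) * q ^ j) * (1 - a * q ^ j) =
      1 - a ^ 3 * (q ^ 3) ^ j := by
    have inv_sum : ν + ν⁻¹ = 1 := by
      field_simp
      linear_combination hν
    linear_combination a * q ^ j * (1 - a * q ^ j) * inv_sum +
      (a * q ^ j) ^ 2 * (1 - a * q ^ j) * mul_inv_cancel₀ hν0
  have left := multipliable_one_sub_mul_pow (-(ν * a)) hq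
  have right := multipliable_one_sub_mul_pow (-(ν⁻¹ * a)) hq
  simp only [qPochhammerInf]
  rw [← left.tprod_mul right, ← (left.mul right).tprod_mul (multipliable_one_sub_mul_pow a hq)]
  exact tprod_congr factor

lemma tendsto_gaussBinom {ι : Type*} {l : Filter ι} {q : 𝕜} (hq : ‖q‖ < 1) {k j : ι → ℕ}
    (hk : Tendsto k l atTop) (hj : Tendsto j l atTop) :
    Tendsto (fun i ↦ gaussBinom q (k i + j i) (k i)) l (𝓝 (qPochhammerInf q q)⁻¹) := by
  have lim := tendsto_qPochhammer q hq
  have hne := qPochhammerInf_self_ne_zero hq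
  have quotient := (lim.comp (hk.atTop_add_atTop hj)).div ((lim.comp hk).mul (lim.comp hj))
    (mul_ne_zero hne hne)
  rw [div_mul_cancel_left₀ hne] at quotient
  exact quotient.congr fun i ↦ (gaussBinom_add_eq_div hq (k i) (j i)).symm

lemma tendsto_gaussBinom_add_self {q : 𝕜} (hq : ‖q‖ < 1) (n : ℤ) :
    Tendsto (fun N : ℕ ↦ gaussBinom q (N + N) (N + n).toNat) atTop
      (𝓝 (qPochhammerInf q q)⁻¹) := by
  have toNat_tendsto (m : ℤ) : Tendsto (fun N : ℕ ↦ (N + m).toNat) atTop atTop := by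
    refine tendsto_atTop.mpr fun b ↦ ?_
    filter_upwards [eventually_ge_atTop (b + m.natAbs)] with N hN
    omega
  refine (tendsto_gaussBinom hq (toNat_tendsto n) (toNat_tendsto (-n))).congr' ?_
  filter_upwards [eventually_ge_atTop n.natAbs] with N hN
  congr 1
  omega

lemma exists_norm_gaussBinom_le {q : 𝕜} (hq : ‖q‖ < 1) :
    ∃ C, ∀ n k, ‖gaussBinom q n k‖ ≤ C := by
  have lim := tendsto_qPochhammer q hq
  obtain ⟨A, hA⟩ := lim.norm.bddAbove_range
  obtain ⟨B, hB⟩ := (lim.inv₀ (qPochhammerInf_self_ne_zero hq)).norm.bddAbove_range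
  have hA' (n : ℕ) : ‖qPochhammer q q n‖ ≤ A := hA ⟨n, rfl⟩
  have hB' (n : ℕ) : ‖(qPochhammer q q n)⁻¹‖ ≤ B := hB ⟨n, rfl⟩
  have hA0 : 0 ≤ A := (norm_nonneg _).trans (hA' 0)
  have hB0 : 0 ≤ B := (norm_nonneg _).trans (hB' 0)
  refine ⟨A * (B * B), fun n k ↦ ?_⟩
  rcases lt_or_ge n k with h | h
  · rw [gaussBinom_eq_zero_of_lt q h, norm_zero]
    positivity
  obtain ⟨l, rfl⟩ := Nat.exists_eq_add_of_le h
  rw [gaussBinom_add_eq_div hq, div_eq_mul_inv, mul_inv, norm_mul, norm_mul]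
  gcongr
  exacts [hA' _, hB' _, hB' _]

lemma tendsto_sum_gaussBinom_mul {q : 𝕜} (hq : ‖q‖ < 1) {f : ℤ → 𝕜}
    (hf : Summable fun n ↦ ‖f n‖) :
    Tendsto (fun N : ℕ ↦ ∑ n ∈ Icc (-N : ℤ) N, gaussBinom q (N + N) (N + n).toNat * f n) atTop
      (𝓝 ((qPochhammerInf q q)⁻¹ * ∑' n, f n)) := by
  obtain ⟨C, hC⟩ := exists_norm_gaussBinom_le hq
  rw [← tsum_mul_left]
  refine .congr (fun N ↦ (sum_eq_tsum_indicator _ _).symm) ?_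
  refine tendsto_tsum_of_dominated_convergence (hf.mul_left C) (fun n ↦ ?_)
    (.of_forall fun N n ↦ ?_)
  · refine ((tendsto_gaussBinom_add_self hq n).mul_const (f n)).congr' ?_
    filter_upwards [eventually_ge_atTop n.natAbs] with N hN
    have mem : n ∈ (Icc (-N : ℤ) N : Set ℤ) := by
      rw [mem_coe, mem_Icc]
      omega
    rw [Set.indicator_of_mem mem]
  · refine (norm_indicator_le_norm_self _ n).trans ?_
    rw [norm_mul]
    gcongr
    exact hC _ _

theorem hasSum_jacobi_triple_product {z q : 𝕜} (hz : z ≠ 0) (hq : ‖q‖ < 1) :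
    HasSum (fun n : ℤ ↦ z ^ n * q ^ n ^ 2)
      (qPochhammerInf (q ^ 2) (q ^ 2) *
        (qPochhammerInf (-(z * q)) (q ^ 2) * qPochhammerInf (-(z⁻¹ * q)) (q ^ 2))) := by
  rcases eq_or_ne q 0 with rfl | hq0
  · convert hasSum_single (f := fun n : ℤ ↦ z ^ n * (0 : 𝕜) ^ n ^ 2) 0 fun n hn ↦ ?_ using 1
    · simp [qPochhammerInf]
    · rw [zero_zpow _ (pow_ne_zero 2 hn), mul_zero]
  have hq2 := norm_pow_lt_one hq two_ne_zero
  have summable := summable_norm_zpow_mul_zpow_sq hz hq0 hq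
  have sum_limit := tendsto_sum_gaussBinom_mul hq2 summable
  simp only [← qPochhammer_sq_mul_qPochhammer_sq_eq_sum_Icc hz hq0] at sum_limit
  have product_limit := (tendsto_qPochhammer (-(z * q)) hq2).mul
    (tendsto_qPochhammer (-(z⁻¹ * q)) hq2)
  rw [tendsto_nhds_unique product_limit sum_limit,
    mul_inv_cancel_left₀ (qPochhammerInf_self_ne_zero hq2)]
  exact summable.of_norm.hasSum

theorem eta_quotient_sum_3_general {ν q : 𝕜} (hν : ν ^ 2 - ν + 1 = 0) (hq : ‖q‖ < 1) :
    HasSum (fun n : ℤ ↦ ν ^ n * q ^ n ^ 2)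
      (qPochhammerInf (q ^ 2) (q ^ 2) ^ 2 * qPochhammerInf (q ^ 3) (q ^ 3) /
        (qPochhammerInf q q * qPochhammerInf (q ^ 6) (q ^ 6))) := by
  have hν0 : ν ≠ 0 := by rintro rfl; simp at hν
  have cube := qPochhammerInf_mul_mul_eq_cube hν q (norm_pow_lt_one hq two_ne_zero)
  have split_one := qPochhammerInf_eq_mul_sq q hq
  have split_three := qPochhammerInf_eq_mul_sq (q ^ 3) (norm_pow_lt_one hq three_ne_zero)
  rw [← pow_two] at split_one
  rw [← pow_mul, ← pow_add] at split_three
  rw [← pow_mul] at cube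
  have φ₁_ne_zero := qPochhammerInf_self_ne_zero hq
  have φ₆_ne_zero := qPochhammerInf_self_ne_zero (norm_pow_lt_one hq (n := 6) (by norm_num))
  convert hasSum_jacobi_triple_product hν0 hq using 1
  rw [div_eq_iff (mul_ne_zero φ₁_ne_zero φ₆_ne_zero), split_one, split_three, ← cube]
  ring

end NormedField

lemma phiP_eq_qPochhammerInf (q : ℂ) (k : ℕ) : phiP q k = qPochhammerInf (q ^ k) (q ^ k) := by
  simp only [phiP, qPochhammerInf, pow_mul, pow_succ']

lemma exp_pi_mul_I_div_three_sq_sub_self_add_one :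
    Complex.exp (Real.pi * Complex.I / 3) ^ 2 - Complex.exp (Real.pi * Complex.I / 3) + 1 = 0 := by
  have primitive := Complex.isPrimitiveRoot_exp 6 (by norm_num)
  rw [show (2 * Real.pi * Complex.I / (6 : ℕ) : ℂ) = Real.pi * Complex.I / 3 by
    push_cast; ring] at primitive
  simpa [Polynomial.cyclotomic_six] using primitive.isRoot_cyclotomic (by norm_num)

open Complex in
/-- `∑_{n ∈ ℤ} ν₆ⁿ q^(n²) = φ₂²φ₃/(φ₁φ₆)` where `ν₆ = e^{πi/3}` is a primitive
sixth root of unity. -/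
theorem eta_quotient_sum_3 (q : ℂ) (hq : ‖q‖ < 1) :
    (∑' n : ℤ, Complex.exp (Real.pi * Complex.I / 3) ^ n * q ^ (n ^ 2)) =
      phiP q 2 ^ 2 * phiP q 3 / (phiP q 1 * phiP q 6) := by
  simpa only [phiP_eq_qPochhammerInf, pow_one] using
    (eta_quotient_sum_3_general exp_pi_mul_I_div_three_sq_sub_self_add_one hq).tsum_eq
end

section
/- ψ(q²)φ(q⁵) − qψ(q^{10})φ(q) = (q;q)_∞ (q⁵;q⁵)_∞, where φ(q)=∑_{n∈ℤ} q^{n²} and ψ(q)=∑_{n≥0} q^{n(n+1)/2}. -/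
/-- Ramanujan's theta function `φ(q) = ∑_{n ∈ ℤ} q^(n²)`. -/
noncomputable def rphi (q : ℂ) : ℂ := ∑' n : ℤ, q ^ (n ^ 2)

/-- Ramanujan's theta function `ψ(q) = ∑_{n≥0} q^(n(n+1)/2)`. -/
noncomputable def rpsi (q : ℂ) : ℂ := ∑' n : ℕ, q ^ (n * (n + 1) / 2)

/-! Consider the double theta series `∑_{s, y ∈ ℤ} (-1)^y q^(s² + s - s y + y (3 y - 1) / 2)`.

Completing the square in `s` and splitting by the parity of `y` separates it into the products
`ψ(q²) φ(q⁵)` and `-q ψ(q¹⁰) φ(q)`, each counted twice because `∑_{n ∈ ℤ} q^(n² + n) = 2 ψ(q²)`.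

Splitting instead by `s` modulo 3, the substitution `(s, y) = (-3 b, a - b)` turns the class `s ≡ 0`
into the product of Euler's pentagonal series for `q` and `q⁵`. The symmetry
`(s, y) ↦ (-1 - s, -y)` exchanges the classes `0` and `2`. On the class `s = 3 k + 1` the involution
`y ↦ 2 k + 1 - y` fixes the exponent and flips the sign, so that class contributes nothing. -/

open Filter Topology

section ResidueClasses

variable {M : Type*} [AddCommMonoid M] [TopologicalSpace M] [ContinuousAdd M]

theorem hasSum_prod_of_fintype {ι β : Type*} [Fintype ι] {f : ι × β → M} {a : ι → M}
    (h : ∀ i, HasSum (fun b => f (i, b)) (a i)) : HasSum f (∑ i, a i) := by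
  classical
  have hfiber (i : ι) : HasSum (fun p : ι × β => if i = p.1 then f p else 0) (a i) := by
    refine ((Prod.mk_right_injective i).hasSum_iff fun p hp => if_neg ?_).mp
      (by simpa [Function.comp_def] using h i)
    rintro rfl
    exact hp ⟨p.2, rfl⟩
  simpa using hasSum_sum fun i (_ : i ∈ Finset.univ) => hfiber i

theorem hasSum_int_prod_of_residues {β : Type*} (n : ℕ) [NeZero n] {f : ℤ × β → M} {a : Fin n → M}
    (h : ∀ r : Fin n, HasSum (fun p : ℤ × β => f (p.1 * n + (r : ℕ), p.2)) (a r)) :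
    HasSum f (∑ r, a r) := by
  let e : Fin n × ℤ × β ≃ ℤ × β := (Equiv.prodAssoc _ _ _).symm.trans
    (((Equiv.prodComm _ _).trans (Int.divModEquiv n).symm).prodCongr (Equiv.refl β))
  rw [← e.hasSum_iff]
  exact hasSum_prod_of_fintype h

end ResidueClasses

theorem tsum_eq_zero_of_comp_equiv_eq_neg {ι R : Type*} [NormedRing R] [NoZeroDivisors R]
    [NeZero (2 : R)] {f : ι → R} (e : ι ≃ ι) (h : ∀ i, f (e i) = -f i) : ∑' i, f i = 0 := by
  have hneg : ∑' i, f i = -∑' i, f i := by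
    rw [← tsum_neg, ← e.tsum_eq]
    exact tsum_congr h
  have htwo : 2 * ∑' i, f i = 0 := by rw [two_mul, ← eq_neg_iff_add_eq_zero, ← hneg]
  exact (mul_eq_zero.mp htwo).resolve_left two_ne_zero

theorem hasSum_mul_of_summable_norm {ι κ R : Type*} [NormedRing R] [CompleteSpace R] {f : ι → R}
    {g : κ → R} {a b : R} (hf : HasSum f a) (hg : HasSum g b) (hf' : Summable fun i => ‖f i‖)
    (hg' : Summable fun j => ‖g j‖) : HasSum (fun p : ι × κ => f p.1 * g p.2) (a * b) :=
  hf.mul hg (summable_mul_of_summable_norm hf' hg')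

theorem norm_pow_lt_one_s19 {R : Type*} [SeminormedRing R] {x : R} (hx : ‖x‖ < 1) {n : ℕ}
    (hn : n ≠ 0) : ‖x ^ n‖ < 1 :=
  (norm_pow_le' x hn.pos).trans_lt (pow_lt_one₀ (norm_nonneg x) hx hn)

section Pentagonal

variable {R : Type*} [NormedCommRing R] {x : R}

theorem summable_norm_negOnePow_mul_pow_pentagonal (hx : ‖x‖ < 1) :
    Summable fun k : ℤ => ‖(k.negOnePow : R) * x ^ pentagonal k‖ := by
  refine ((summable_norm_geometric_of_norm_lt_one hx).comp_injective pentagonal_injective).congr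
    fun k => ?_
  rcases Int.units_eq_one_or k.negOnePow with hk | hk <;> simp [hk]

variable [NormOneClass R]

theorem norm_prod_one_sub_pow_le (hx : ‖x‖ < 1) {ι : Type*} (s : Finset ι) {e : ι → ℕ}
    (he : e.Injective) : ‖∏ i ∈ s, (1 - x ^ e i)‖ ≤ Real.exp (∑' n : ℕ, ‖x ^ n‖) := by
  have hsum := summable_norm_geometric_of_norm_lt_one hx
  have hle : ∑ i ∈ s, ‖-x ^ e i‖ ≤ ∑' n : ℕ, ‖x ^ n‖ := by
    simpa only [norm_neg, Finset.sum_map, Function.Embedding.coeFn_mk] using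
      hsum.sum_le_tsum (s.map ⟨e, he⟩) fun n _ => norm_nonneg (x ^ n)
  simp only [sub_eq_add_neg]
  calc ‖∏ i ∈ s, (1 + -x ^ e i)‖
      ≤ ‖∏ i ∈ s, (1 + -x ^ e i) - 1‖ + ‖(1 : R)‖ := norm_le_norm_sub_add _ _
    _ ≤ Real.exp (∑ i ∈ s, ‖-x ^ e i‖) := by
      rw [norm_one, ← le_sub_iff_add_le]
      exact s.norm_prod_one_add_sub_one_le _
    _ ≤ Real.exp (∑' n : ℕ, ‖x ^ n‖) := Real.exp_le_exp.mpr hle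

theorem norm_pow_mul_prod_one_sub_pow_le (hx : ‖x‖ < 1) (k n : ℕ) :
    ‖x ^ ((k + 1) * n) * ∏ i ∈ Finset.range (n + 1), (1 - x ^ (k + i + 1))‖ ≤
      ‖x‖ ^ n * Real.exp (∑' n : ℕ, ‖x ^ n‖) := by
  refine norm_mul_le_of_le ?_ (norm_prod_one_sub_pow_le hx _ fun i j hij => by simpa using hij)
  calc ‖x ^ ((k + 1) * n)‖ ≤ ‖x‖ ^ ((k + 1) * n) := norm_pow_le _ _
    _ ≤ ‖x‖ ^ n := pow_le_pow_of_le_one (norm_nonneg _) hx.le (Nat.le_mul_of_pos_left n k.succ_pos)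

/-- The remainder of the recursion behind `Pentagonal.tprod_one_sub_pow` after its first `k + 1`
steps. -/
theorem tendsto_pow_mul_tsum_pow_mul_prod_one_sub_pow (hx : ‖x‖ < 1) :
    Tendsto (fun k : ℕ => (-1) ^ (k + 1) * x ^ ((k + 1) * (3 * k + 4) / 2) *
      ∑' n : ℕ, x ^ ((k + 1) * n) * ∏ i ∈ Finset.range (n + 1), (1 - x ^ (k + i + 1)))
      atTop (𝓝 0) := by
  have hbound := (summable_geometric_of_lt_one (norm_nonneg _) hx).mul_right
    (Real.exp (∑' n : ℕ, ‖x ^ n‖))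
  have hlim := (tendsto_pow_atTop_nhds_zero_of_lt_one (norm_nonneg _) hx).mul_const
    (∑' n : ℕ, ‖x‖ ^ n * Real.exp (∑' n : ℕ, ‖x ^ n‖))
  rw [zero_mul] at hlim
  refine squeeze_zero_norm (fun k => norm_mul_le_of_le ?_ <|
    tsum_of_norm_bounded hbound.hasSum (norm_pow_mul_prod_one_sub_pow_le hx k)) hlim
  have hexp : k ≤ (k + 1) * (3 * k + 4) / 2 := by
    rw [Nat.le_div_iff_mul_le two_pos]
    nlinarith
  calc ‖(-1) ^ (k + 1) * x ^ ((k + 1) * (3 * k + 4) / 2)‖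
      = ‖x ^ ((k + 1) * (3 * k + 4) / 2)‖ := by
        rcases neg_one_pow_eq_or R (k + 1) with hk | hk <;> simp [hk]
    _ ≤ ‖x‖ ^ ((k + 1) * (3 * k + 4) / 2) := norm_pow_le _ _
    _ ≤ ‖x‖ ^ k := pow_le_pow_of_le_one (norm_nonneg _) hx.le hexp

variable [CompleteSpace R]

theorem multipliable_one_sub_pow_comp (hx : ‖x‖ < 1) {ι : Type*} {e : ι → ℕ}
    (he : e.Injective) : Multipliable fun i => 1 - x ^ e i := by
  have hsum : Summable fun i => ‖-x ^ e i‖ := by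
    simpa only [norm_neg, Function.comp_def] using
      (summable_norm_geometric_of_norm_lt_one hx).comp_injective he
  simpa only [sub_eq_add_neg] using multipliable_one_add_of_summable hsum

theorem hasSum_negOnePow_mul_pow_pentagonal (hx : ‖x‖ < 1) :
    HasSum (fun k : ℤ => (k.negOnePow : R) * x ^ pentagonal k) (∏' n : ℕ, (1 - x ^ (n + 1))) := by
  have hsum := (summable_norm_negOnePow_mul_pow_pentagonal hx).of_norm.hasSum
  have hpaired : HasSum (fun k : ℕ => (-1) ^ k * (x ^ pentagonal (-k) - x ^ pentagonal (k + 1)))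
      (∑' k : ℤ, (k.negOnePow : R) * x ^ pentagonal k) := by
    refine ((Equiv.neg ℤ).hasSum_iff.mpr hsum).nat_add_neg_add_one.congr_fun fun k => ?_
    simp only [Function.comp_apply, Equiv.neg_apply, neg_neg, Int.negOnePow_neg,
      Int.negOnePow_succ, Units.val_neg, Int.cast_neg, Int.cast_negOnePow_natCast]
    ring
  have hEuler := Pentagonal.tprod_one_sub_pow (tendsto_pow_atTop_nhds_zero_of_norm_lt_one hx)
    (fun k => ((summable_geometric_of_lt_one (norm_nonneg _) hx).mul_right _).of_norm_bounded
      (norm_pow_mul_prod_one_sub_pow_le hx k))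
    (fun k => multipliable_one_sub_pow_comp hx fun m n hmn => by simpa using hmn)
    hpaired.summable (tendsto_pow_mul_tsum_pow_mul_prod_one_sub_pow hx)
  rwa [hEuler, hpaired.tsum_eq]

end Pentagonal

section Theta

variable {𝕜 : Type*} [NormedField 𝕜] {q : 𝕜}

theorem summable_norm_zpow_sq (hq : ‖q‖ < 1) : Summable fun n : ℤ => ‖q ^ (n ^ 2)‖ := by
  have hsum : Summable fun n : ℕ => ‖q ^ (n ^ 2)‖ :=
    (summable_norm_geometric_of_norm_lt_one hq).comp_injective (Nat.pow_left_injective two_ne_zero)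
  refine Summable.of_nat_of_neg ?_ ?_ <;> simpa [← zpow_natCast] using hsum

theorem hasSum_zpow_sq_add_self [CompleteSpace 𝕜] (hq : ‖q‖ < 1) :
    HasSum (fun n : ℤ => q ^ (n ^ 2 + n)) (2 * ∑' n : ℕ, (q ^ 2) ^ (n * (n + 1) / 2)) := by
  have hinj : Function.Injective fun n : ℕ => n * (n + 1) :=
    StrictMono.injective fun m n hmn => by gcongr
  have hsum : Summable fun n : ℕ => q ^ (n * (n + 1)) :=
    ((summable_norm_geometric_of_norm_lt_one hq).comp_injective hinj).of_norm
  simp only [← pow_mul, Nat.mul_div_cancel' (Nat.even_mul_succ_self _).two_dvd, two_mul]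
  refine HasSum.of_nat_of_neg_add_one ?_ ?_ <;>
  · refine hsum.hasSum.congr_fun fun n => ?_
    rw [← zpow_natCast]
    congr 1
    push_cast
    ring

theorem summable_norm_zpow_sq_add_self (hq : ‖q‖ < 1) :
    Summable fun n : ℤ => ‖q ^ (n ^ 2 + n)‖ := by
  simp only [norm_zpow]
  exact (hasSum_zpow_sq_add_self (q := ‖q‖) (by rwa [norm_norm])).summable

end Theta

section Lattice

theorem zpow_add_of_nonneg {G : Type*} [GroupWithZero G] (a : G) {m n : ℤ} (hm : 0 ≤ m)
    (hn : 0 ≤ n) : a ^ (m + n) = a ^ m * a ^ n :=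
  zpow_add' (by omega)

theorem sq_add_self_nonneg (n : ℤ) : 0 ≤ n ^ 2 + n := by
  nlinarith [sq_nonneg (2 * n + 1)]

/-- The general term of the double theta series
`∑_{s, y ∈ ℤ} (-1)^y q^(s² + s - s y + y (3 y - 1) / 2)`, indexed by `p = (s, y)`. The exponent is
kept in `ℤ`, like the exponent `n ^ 2` in `rphi`, although it is never negative. -/
def latticeTerm {𝕜 : Type*} [Field 𝕜] (q : 𝕜) (p : ℤ × ℤ) : 𝕜 :=
  p.2.negOnePow * q ^ (p.1 ^ 2 + p.1 - p.1 * p.2 + pentagonal p.2)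

section Field

variable {𝕜 : Type*} [Field 𝕜] (q : 𝕜)

theorem latticeTerm_add_mul_two (m n : ℤ) :
    latticeTerm q (m + n, n * 2) = q ^ (m ^ 2 + m) * (q ^ 5) ^ (n ^ 2) := by
  have hexp : (m + n) ^ 2 + (m + n) - (m + n) * (n * 2) + pentagonal (n * 2) =
      m ^ 2 + m + 5 * n ^ 2 := by
    linarith [two_mul_natCast_pentagonal (n * 2)]
  rw [latticeTerm, hexp, zpow_add_of_nonneg q (sq_add_self_nonneg m) (by positivity), mul_comm n,
    Int.negOnePow_two_mul, zpow_mul, zpow_ofNat]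
  simp

theorem latticeTerm_add_mul_two_add_one (m n : ℤ) :
    latticeTerm q (m + n, n * 2 + 1) = -q * (q ^ (m ^ 2) * (q ^ 5) ^ (n ^ 2 + n)) := by
  have hexp : (m + n) ^ 2 + (m + n) - (m + n) * (n * 2 + 1) + pentagonal (n * 2 + 1) =
      1 + (m ^ 2 + 5 * (n ^ 2 + n)) := by
    linarith [two_mul_natCast_pentagonal (n * 2 + 1)]
  have hn : 0 ≤ 5 * (n ^ 2 + n) := mul_nonneg (by norm_num) (sq_add_self_nonneg n)
  rw [latticeTerm, hexp, zpow_add_of_nonneg q zero_le_one (add_nonneg (sq_nonneg m) hn),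
    zpow_add_of_nonneg q (sq_nonneg m) hn, mul_comm n, Int.negOnePow_two_mul_add_one, zpow_mul,
    zpow_ofNat]
  simp

theorem latticeTerm_neg_mul_three_sub (a b : ℤ) :
    latticeTerm q (-b * 3, a - b) =
      (a.negOnePow * q ^ pentagonal a) * (b.negOnePow * (q ^ 5) ^ pentagonal b) := by
  have hexp : (-b * 3) ^ 2 + -b * 3 - -b * 3 * (a - b) + pentagonal (a - b) =
      ((pentagonal a + 5 * pentagonal b : ℕ) : ℤ) := by
    push_cast
    linarith [two_mul_natCast_pentagonal a, two_mul_natCast_pentagonal b,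
      two_mul_natCast_pentagonal (a - b)]
  rw [latticeTerm, hexp, zpow_natCast, pow_add, pow_mul, Int.negOnePow_sub]
  push_cast
  ring

theorem latticeTerm_neg_one_sub_neg (s y : ℤ) :
    latticeTerm q (-1 - s, -y) = latticeTerm q (s, y) := by
  have hexp : (-1 - s) ^ 2 + (-1 - s) - (-1 - s) * -y + pentagonal (-y) =
      s ^ 2 + s - s * y + pentagonal y := by
    linarith [two_mul_natCast_pentagonal y, two_mul_natCast_pentagonal (-y)]
  simp only [latticeTerm, hexp, Int.negOnePow_neg]

theorem latticeTerm_mul_three_add_one_sub (k y : ℤ) :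
    latticeTerm q (k * 3 + 1, 2 * k + 1 - y) = -latticeTerm q (k * 3 + 1, y) := by
  have hexp : (k * 3 + 1) ^ 2 + (k * 3 + 1) - (k * 3 + 1) * (2 * k + 1 - y) +
      pentagonal (2 * k + 1 - y) =
      (k * 3 + 1) ^ 2 + (k * 3 + 1) - (k * 3 + 1) * y + pentagonal y := by
    linarith [two_mul_natCast_pentagonal y, two_mul_natCast_pentagonal (2 * k + 1 - y)]
  simp only [latticeTerm, hexp, Int.negOnePow_sub, Int.negOnePow_two_mul_add_one, neg_mul, one_mul,
    Units.val_neg, Int.cast_neg]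

end Field

section Complete

variable {𝕜 : Type*} [NormedField 𝕜] [CompleteSpace 𝕜] {q : 𝕜}

theorem hasSum_latticeTerm_mul_two (hq : ‖q‖ < 1) :
    HasSum (fun p : ℤ × ℤ => latticeTerm q (p.2, p.1 * 2))
      (2 * (∑' n : ℕ, (q ^ 2) ^ (n * (n + 1) / 2)) * ∑' n : ℤ, (q ^ 5) ^ (n ^ 2)) := by
  let e : ℤ × ℤ ≃ ℤ × ℤ :=
    (Equiv.prodComm ℤ ℤ).trans (Equiv.prodShear (Equiv.refl ℤ) Equiv.addRight)
  have hφ := summable_norm_zpow_sq (norm_pow_lt_one_s19 hq (Nat.succ_ne_zero 4))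
  have hψ := hasSum_zpow_sq_add_self hq
  rw [← e.hasSum_iff]
  exact (hasSum_mul_of_summable_norm hψ hφ.of_norm.hasSum
    (summable_norm_zpow_sq_add_self hq) hφ).congr_fun
      fun p => latticeTerm_add_mul_two q p.1 p.2

theorem hasSum_latticeTerm_mul_two_add_one (hq : ‖q‖ < 1) :
    HasSum (fun p : ℤ × ℤ => latticeTerm q (p.2, p.1 * 2 + 1))
      (-q * ((∑' n : ℤ, q ^ (n ^ 2)) * (2 * ∑' n : ℕ, (q ^ 10) ^ (n * (n + 1) / 2)))) := by
  let e : ℤ × ℤ ≃ ℤ × ℤ :=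
    (Equiv.prodComm ℤ ℤ).trans (Equiv.prodShear (Equiv.refl ℤ) Equiv.addRight)
  have hq5 := norm_pow_lt_one_s19 hq (Nat.succ_ne_zero 4)
  have hφ := summable_norm_zpow_sq hq
  have hψ := hasSum_zpow_sq_add_self hq5
  rw [← pow_mul q 5 2] at hψ
  rw [← e.hasSum_iff]
  exact ((hasSum_mul_of_summable_norm hφ.of_norm.hasSum hψ hφ
    (summable_norm_zpow_sq_add_self hq5)).mul_left (-q)).congr_fun
      fun p => latticeTerm_add_mul_two_add_one q p.1 p.2

theorem hasSum_latticeTerm (hq : ‖q‖ < 1) :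
    HasSum (latticeTerm q)
      (2 * ((∑' n : ℕ, (q ^ 2) ^ (n * (n + 1) / 2)) * (∑' n : ℤ, (q ^ 5) ^ (n ^ 2)) -
        q * (∑' n : ℕ, (q ^ 10) ^ (n * (n + 1) / 2)) * ∑' n : ℤ, q ^ (n ^ 2))) := by
  rw [← (Equiv.prodComm ℤ ℤ).hasSum_iff]
  convert hasSum_int_prod_of_residues 2 (f := latticeTerm q ∘ Equiv.prodComm ℤ ℤ) (a := ![_, _])
    (Fin.forall_fin_two.mpr ⟨by simpa using hasSum_latticeTerm_mul_two hq,
      by simpa using hasSum_latticeTerm_mul_two_add_one hq⟩) using 1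
  simp only [Fin.sum_univ_two, Matrix.cons_val_zero, Matrix.cons_val_one]
  ring

theorem hasSum_latticeTerm_mul_three (hq : ‖q‖ < 1) :
    HasSum (fun p : ℤ × ℤ => latticeTerm q (p.1 * 3, p.2))
      ((∏' n : ℕ, (1 - q ^ (n + 1))) * ∏' n : ℕ, (1 - q ^ (5 * (n + 1)))) := by
  let e : ℤ × ℤ ≃ ℤ × ℤ :=
    (Equiv.prodComm ℤ ℤ).trans ((Equiv.prodShear (Equiv.refl ℤ) Equiv.subRight).trans
      ((Equiv.neg ℤ).prodCongr (Equiv.refl ℤ)))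
  have hq5 := norm_pow_lt_one_s19 hq (Nat.succ_ne_zero 4)
  have hη := hasSum_negOnePow_mul_pow_pentagonal hq5
  simp only [← pow_mul q 5 (_ + 1)] at hη
  rw [← e.hasSum_iff]
  exact (hasSum_mul_of_summable_norm (hasSum_negOnePow_mul_pow_pentagonal hq) hη
    (summable_norm_negOnePow_mul_pow_pentagonal hq)
    (summable_norm_negOnePow_mul_pow_pentagonal hq5)).congr_fun
      fun p => latticeTerm_neg_mul_three_sub q p.1 p.2

theorem hasSum_latticeTerm_mul_three_add_two (hq : ‖q‖ < 1) :
    HasSum (fun p : ℤ × ℤ => latticeTerm q (p.1 * 3 + 2, p.2))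
      ((∏' n : ℕ, (1 - q ^ (n + 1))) * ∏' n : ℕ, (1 - q ^ (5 * (n + 1)))) := by
  let e : ℤ × ℤ ≃ ℤ × ℤ := (Equiv.subLeft (-1)).prodCongr (Equiv.neg ℤ)
  rw [← e.hasSum_iff]
  refine (hasSum_latticeTerm_mul_three hq).congr_fun fun p => ?_
  rw [← latticeTerm_neg_one_sub_neg q (p.1 * 3)]
  simp only [e, Function.comp_apply, Equiv.prodCongr_apply, Prod.map_fst, Prod.map_snd,
    Equiv.subLeft_apply, Equiv.neg_apply]
  ring_nf

theorem hasSum_latticeTerm_mul_three_add_one [NeZero (2 : 𝕜)] (hq : ‖q‖ < 1) :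
    HasSum (fun p : ℤ × ℤ => latticeTerm q (p.1 * 3 + 1, p.2)) 0 := by
  have hinj : Function.Injective fun p : ℤ × ℤ => (p.1 * 3 + 1, p.2) := by
    rintro ⟨k, y⟩ ⟨l, z⟩ h
    simpa using h
  have hzero : ∑' p : ℤ × ℤ, latticeTerm q (p.1 * 3 + 1, p.2) = 0 :=
    tsum_eq_zero_of_comp_equiv_eq_neg
      (Equiv.prodShear (Equiv.refl ℤ) fun k => Equiv.subLeft (2 * k + 1))
      fun p => latticeTerm_mul_three_add_one_sub q p.1 p.2
  simpa only [hzero, Function.comp_def] using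
    ((hasSum_latticeTerm hq).summable.comp_injective hinj).hasSum

end Complete

end Lattice

theorem psi_phi_eta_general {𝕜 : Type*} [NormedField 𝕜] [CompleteSpace 𝕜] [NeZero (2 : 𝕜)]
    {q : 𝕜} (hq : ‖q‖ < 1) :
    (∑' n : ℕ, (q ^ 2) ^ (n * (n + 1) / 2)) * (∑' n : ℤ, (q ^ 5) ^ (n ^ 2)) -
        q * (∑' n : ℕ, (q ^ 10) ^ (n * (n + 1) / 2)) * ∑' n : ℤ, q ^ (n ^ 2) =
      (∏' n : ℕ, (1 - q ^ (n + 1))) * ∏' n : ℕ, (1 - q ^ (5 * (n + 1))) := by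
  have hmod : HasSum (latticeTerm q) (∑ r, ![_, 0, _] r) :=
    hasSum_int_prod_of_residues 3 <| by
      simpa [Fin.forall_fin_succ] using ⟨hasSum_latticeTerm_mul_three hq,
        hasSum_latticeTerm_mul_three_add_one hq, hasSum_latticeTerm_mul_three_add_two hq⟩
  refine mul_left_cancel₀ (two_ne_zero (α := 𝕜)) ((hasSum_latticeTerm hq).unique ?_)
  simpa [Fin.sum_univ_three, two_mul] using hmod

/-- `ψ(q²)φ(q⁵) − q ψ(q¹⁰)φ(q) = (q;q)_∞ (q⁵;q⁵)_∞`. -/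
theorem psi_phi_eta (q : ℂ) (hq : ‖q‖ < 1) :
    rpsi (q ^ 2) * rphi (q ^ 5) - q * rpsi (q ^ 10) * rphi q =
      (∏' n : ℕ, (1 - q ^ (n + 1))) * ∏' n : ℕ, (1 - q ^ (5 * (n + 1))) := by
  exact psi_phi_eta_general hq
end
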